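/- Let G be a connected planar graph on n ≥ 5 vertices and let r ∈ V(G) be a vertex of degree exactly 3. Then sn₂(G, r) > n/3 − 1. -/

import Mathlib

/-- The set of vertices on fire after `t` fire-spread rounds, when the fire breaks out
at `v` and the firefighters protect the vertices of `P s` in round `s + 1` (protection
happens just before the `s`-th spread step and is permanent). -/
def burnedSet {V : Type*} (G : SimpleGraph V) (v : V) (P : ℕ → Set V) : ℕ → Set V
  | 0 => {v}
  | t + 1 => burnedSet G v P t ∪
      {w | (∃ u ∈ burnedSet G v P t, G.Adj u w) ∧ ∀ s ≤ t, w ∉ P s}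

/-- A strategy `P` is valid for the per-round budgets `b` if in each round it protects
at most `b t` vertices, none of which are already on fire. -/
def ValidStrategy {V : Type*} (G : SimpleGraph V) (b : ℕ → ℕ) (v : V) (P : ℕ → Set V) : Prop :=
  ∀ t, (P t).Finite ∧ (P t).ncard ≤ b t ∧ Disjoint (P t) (burnedSet G v P t)

/-- `sn G b v` is the maximum number of vertices that can be saved (i.e. that never
catch fire) when the fire breaks out at `v` and the firefighters may protect at most
`b t` vertices in round `t + 1`. -/
noncomputable def sn {V : Type*} (G : SimpleGraph V) (b : ℕ → ℕ) (v : V) : ℕ :=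
  sSup {m | ∃ P, ValidStrategy G b v P ∧
    m = Nat.card {w : V | ∀ t, w ∉ burnedSet G v P t}}

/-- The surviving rate of `G` with per-round budgets `b` : the expected fraction of
vertices that can be saved when the starting vertex is chosen uniformly at random. -/
noncomputable def survivingRate {V : Type*} [Fintype V] (G : SimpleGraph V) (b : ℕ → ℕ) : ℝ :=
  (∑ v : V, (sn G b v : ℝ)) / (Fintype.card V : ℝ) ^ 2

/-- A plane embedding of a simple graph: vertices are points of the plane and edges are
simple arcs between their endpoints, such that arcs avoid all other vertices and two
arcs of distinct edges meet only in common endpoints. -/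
structure PlaneEmbedding {V : Type*} (G : SimpleGraph V) where
  pos : V → ℝ × ℝ
  arc : V → V → ℝ → ℝ × ℝ
  pos_inj : Function.Injective pos
  arc_cont : ∀ ⦃u v⦄, G.Adj u v → Continuous (arc u v)
  arc_injOn : ∀ ⦃u v⦄, G.Adj u v → Set.InjOn (arc u v) (Set.Icc 0 1)
  arc_zero : ∀ ⦃u v⦄, G.Adj u v → arc u v 0 = pos u
  arc_one : ∀ ⦃u v⦄, G.Adj u v → arc u v 1 = pos v
  arc_symm : ∀ ⦃u v⦄, G.Adj u v → ∀ t, arc v u t = arc u v (1 - t)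
  arc_avoid : ∀ ⦃u v⦄, G.Adj u v → ∀ w : V, pos w ∉ arc u v '' Set.Ioo 0 1
  arc_meet : ∀ ⦃u v x y⦄, G.Adj u v → G.Adj x y → s(u, v) ≠ s(x, y) →
      arc u v '' Set.Icc 0 1 ∩ arc x y '' Set.Icc 0 1 ⊆
        ({pos u, pos v} : Set (ℝ × ℝ)) ∩ {pos x, pos y}

/-- A graph is planar if it admits a plane embedding. -/
def IsPlanar {V : Type*} (G : SimpleGraph V) : Prop :=
  Nonempty (PlaneEmbedding G)

open scoped unitInterval

lemma exists_log_square (F : C(I × I, ℂ)) (hF : ∀ x, F x ≠ 0) :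
    ∃ l : C(I × I, ℂ), ∀ x, Complex.exp (l x) = F x := by
  have cov := Complex.isCoveringMap_exp
  let H : C(I × I, {z : ℂ // z ≠ 0}) := ⟨fun x => ⟨F x, hF x⟩, by fun_prop⟩
  let H0 : C(I, {z : ℂ // z ≠ 0}) := ⟨fun x => H (0, x), by fun_prop⟩
  obtain ⟨f, hf, -⟩ := cov.exists_path_lifts H0 (Complex.log (F (0, 0)))
    (by ext; simp [H0, H, Complex.exp_log (hF _)])
  have hH : ∀ a, H (0, a) = (fun z : ℂ ↦ (⟨_, z.exp_ne_zero⟩ : {z : ℂ // z ≠ 0})) (f a) :=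
    fun a => (congrFun hf a).symm
  refine ⟨cov.liftHomotopy H f hH, fun x => ?_⟩
  have := congrFun (cov.liftHomotopy_lifts H f hH) x
  exact congrArg Subtype.val this

lemma lift_unique (l l' : I → ℂ) (hl : Continuous l) (hl' : Continuous l')
    (c : ℂ) (h : ∀ t, Complex.exp (l t) = c * Complex.exp (l' t)) :
    l 1 - l 0 = l' 1 - l' 0 := by
  have cov := Complex.isCoveringMap_exp
  have h0 : c = Complex.exp (l 0 - l' 0) := by
    rw [Complex.exp_sub, h 0, mul_div_cancel_right₀ _ (Complex.exp_ne_zero _)]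
  have key := cov.eq_of_comp_eq (g₁ := l) (g₂ := fun t => l' t + (l 0 - l' 0)) hl (by fun_prop)
    (by
      funext t
      apply Subtype.ext
      simp only [Function.comp]
      rw [h t, Complex.exp_add, ← h0, mul_comm]) 0 (by ring)
  have := congrFun key 1
  rw [this]; ring

/-- Increment of the logarithm along a nonvanishing path with prescribed logs of endpoints. -/
lemma exists_incr (g : I → ℂ) (hg : Continuous g) (h0 : ∀ t, g t ≠ 0) (p q : ℂ)
    (hp : Complex.exp p = g 0) (hq : Complex.exp q = g 1) :
    ∃ m : ℤ, ∀ l : I → ℂ, Continuous l → ∀ c : ℂ, (∀ t, Complex.exp (l t) = c * g t) →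
      l 1 - l 0 = q - p + m * (2 * Real.pi * Complex.I) := by
  obtain ⟨L, hL⟩ := exists_log_square ⟨fun x => g x.1, by fun_prop⟩ (fun x => h0 _)
  have hL' : ∀ t : I, Complex.exp (L (t, 0)) = g t := fun t => hL (t, 0)
  obtain ⟨n0, hn0⟩ := Complex.exp_eq_exp_iff_exists_int.1 ((hL' 0).trans hp.symm)
  obtain ⟨n1, hn1⟩ := Complex.exp_eq_exp_iff_exists_int.1 ((hL' 1).trans hq.symm)
  refine ⟨n1 - n0, fun l hl c h => ?_⟩
  rw [lift_unique l (fun t => L (t, 0)) hl (by fun_prop) c (fun t => by rw [h, hL'])]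
  simp only [hn0, hn1]; push_cast; ring

theorem no_K33_drawing (a b : Fin 3 → ℂ) (γ : ∀ i j, Path (a i) (b j))
    (h : ∀ i j i' j', i ≠ i' → j ≠ j' → ∀ s t, γ i j s ≠ γ i' j' t) : False := by
  have other : ∀ j : Fin 3, ∃ j', j ≠ j' := by decide
  have haa : ∀ i i', i ≠ i' → a i ≠ a i' := fun i i' hi => by
    simpa using h i 0 i' 1 hi (by decide) 0 0
  have hbb : ∀ i i', i ≠ i' → b i ≠ b i' := fun i i' hi => by
    simpa using h 0 i 1 i' (by decide) hi 1 1
  have hab : ∀ i j, b j ≠ a i := fun i j => by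
    obtain ⟨i', hi⟩ := other i
    obtain ⟨j', hj⟩ := other j
    simpa using h i' j i j' hi.symm hj 1 0
  have hga : ∀ i j i', i ≠ i' → ∀ s, γ i j s - a i' ≠ 0 := fun i j i' hi s => by
    obtain ⟨j', hj⟩ := other j
    simpa [sub_ne_zero] using h i j i' j' hi hj s 0
  have hgb : ∀ i j j', j ≠ j' → ∀ s, γ i j s - b j' ≠ 0 := fun i j j' hj s => by
    obtain ⟨i', hi⟩ := other i
    simpa [sub_ne_zero] using h i j i' j' hi hj s 1
  -- logs
  have hlog : ∀ c : Fin 3 → ℂ, (∀ i i', i ≠ i' → c i ≠ c i') → ∃ α : Fin 3 → Fin 3 → ℂ,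
      (∀ i i', i ≠ i' → Complex.exp (α i i') = c i - c i') ∧
      ∀ i i', i < i' → α i' i = α i i' + Real.pi * Complex.I := by
    intro c hc
    refine ⟨fun i i' => if i < i' then Complex.log (c i - c i') else
      Complex.log (c i' - c i) + Real.pi * Complex.I, ?_, ?_⟩
    · intro i i' hi
      dsimp only
      split_ifs
      · exact Complex.exp_log (sub_ne_zero.2 (hc _ _ hi))
      · rw [Complex.exp_add, Complex.exp_log (sub_ne_zero.2 (hc _ _ hi.symm)), Complex.exp_pi_mul_I]
        ring
    · intro i i' hi
      simp [hi, hi.not_gt]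
  obtain ⟨α, hα, hα'⟩ := hlog a haa
  obtain ⟨β, hβ, hβ'⟩ := hlog b hbb
  let δ : Fin 3 → Fin 3 → ℂ := fun j i => Complex.log (b j - a i)
  have hδ : ∀ j i, Complex.exp (δ j i) = b j - a i := fun j i =>
    Complex.exp_log (sub_ne_zero.2 (hab i j))
  have hδ' : ∀ j i, Complex.exp (δ j i + Real.pi * Complex.I) = a i - b j := fun j i => by
    rw [Complex.exp_add, hδ, Complex.exp_pi_mul_I]; ring
  have hu : ∀ i j i', ∃ m : ℤ, i ≠ i' → ∀ l : I → ℂ, Continuous l → ∀ c : ℂ,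
      (∀ t, Complex.exp (l t) = c * (γ i j t - a i')) →
      l 1 - l 0 = δ j i' - α i i' + m * (2 * Real.pi * Complex.I) := by
    intro i j i'
    by_cases hi : i = i'
    · exact ⟨0, fun h => absurd hi h⟩
    · obtain ⟨m, hm⟩ := exists_incr (fun t => γ i j t - a i') (by fun_prop) (hga i j i' hi)
        (α i i') (δ j i') (by simp [hα i i' hi]) (by simp [hδ])
      exact ⟨m, fun _ => hm⟩
  have hv : ∀ i j j', ∃ m : ℤ, j ≠ j' → ∀ l : I → ℂ, Continuous l → ∀ c : ℂ,
      (∀ t, Complex.exp (l t) = c * (γ i j t - b j')) →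
      l 1 - l 0 = β j j' - (δ j' i + Real.pi * Complex.I) + m * (2 * Real.pi * Complex.I) := by
    intro i j j'
    by_cases hi : j = j'
    · exact ⟨0, fun h => absurd hi h⟩
    · obtain ⟨m, hm⟩ := exists_incr (fun t => γ i j t - b j') (by fun_prop) (hgb i j j' hi)
        (δ j' i + Real.pi * Complex.I) (β j j') (by simp [hδ']) (by simp [hβ j j' hi])
      exact ⟨m, fun _ => hm⟩
  choose m hm using hu
  choose k hk using hv
  have main : ∀ i j i' j', i ≠ i' → j ≠ j' →
      α i' i - α i i' + (β j' j - β j j') =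
        ((m i' j' i - m i j i' + k i j j' - k i' j' j : ℤ) : ℂ) * (2 * Real.pi * Complex.I) := by
    intro i j i' j' hi hj
    obtain ⟨L, hL⟩ := exists_log_square ⟨fun x => γ i j x.1 - γ i' j' x.2, by fun_prop⟩
      (fun x => sub_ne_zero.2 (h i j i' j' hi hj _ _))
    have hL' : ∀ s t : I, Complex.exp (L (s, t)) = γ i j s - γ i' j' t := fun s t => hL (s, t)
    have e1 := hm i j i' hi (fun t => L (t, 0)) (by fun_prop) 1 (fun t => by simp [hL'])
    have e2 := hk i j j' hj (fun t => L (t, 1)) (by fun_prop) 1 (fun t => by simp [hL'])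
    have e3 := hm i' j' i hi.symm (fun t => L (0, t)) (by fun_prop) (-1) (fun t => by simp [hL'])
    have e4 := hk i' j' j hj.symm (fun t => L (1, t)) (by fun_prop) (-1) (fun t => by simp [hL'])
    push_cast
    linear_combination e3 + e2 - e1 - e4
  have hpi : (2 * Real.pi * Complex.I : ℂ) ≠ 0 := Complex.two_pi_I_ne_zero
  have up : ∀ i j i' j', i < i' → j < j' → m i' j' i - m i j i' + k i j j' - k i' j' j = 1 := by
    intro i j i' j' hi hj
    have := main i j i' j' hi.ne hj.ne
    rw [hα' i i' hi, hβ' j j' hj] at this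
    have h2 : (((m i' j' i - m i j i' + k i j j' - k i' j' j : ℤ) : ℂ) - 1) *
      (2 * Real.pi * Complex.I) = 0 := by linear_combination -this
    have h3 := (mul_eq_zero.1 h2).resolve_right hpi
    exact_mod_cast sub_eq_zero.1 h3
  have dn : ∀ i j i' j', i < i' → j' < j → m i' j' i - m i j i' + k i j j' - k i' j' j = 0 := by
    intro i j i' j' hi hj
    have := main i j i' j' hi.ne hj.ne'
    rw [hα' i i' hi, hβ' j' j hj] at this
    have h2 : (((m i' j' i - m i j i' + k i j j' - k i' j' j : ℤ) : ℂ)) *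
      (2 * Real.pi * Complex.I) = 0 := by linear_combination -this
    have h3 := (mul_eq_zero.1 h2).resolve_right hpi
    exact_mod_cast h3
  have U := fun i i' (hi : i < i') => And.intro (up i 0 i' 1 hi (by decide))
    (And.intro (up i 0 i' 2 hi (by decide)) (up i 1 i' 2 hi (by decide)))
  have D := fun i i' (hi : i < i') => And.intro (dn i 1 i' 0 hi (by decide))
    (And.intro (dn i 2 i' 0 hi (by decide)) (dn i 2 i' 1 hi (by decide)))
  have U01 := U 0 1 (by decide)
  have U02 := U 0 2 (by decide)
  have U12 := U 1 2 (by decide)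
  have D01 := D 0 1 (by decide)
  have D02 := D 0 2 (by decide)
  have D12 := D 1 2 (by decide)
  omega

section Connectivity

/-- Reachability inside a vertex set. -/
def Rch {V : Type*} (G : SimpleGraph V) (S : Set V) : V → V → Prop :=
  Relation.ReflTransGen (fun u w => u ∈ S ∧ w ∈ S ∧ G.Adj u w)

/-- A nonempty set of vertices inducing a connected graph. -/
def Conn {V : Type*} (G : SimpleGraph V) (S : Set V) : Prop :=
  ∃ c ∈ S, ∀ w ∈ S, Rch G S c w

/-- The component of `v` in the graph with the vertices of `T` deleted. -/
def comp {V : Type*} (G : SimpleGraph V) (T : Set V) (v : V) : Set V := {w | Rch G Tᶜ v w}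

variable {V : Type*} {G : SimpleGraph V}

lemma Rch.symm {S : Set V} {u w : V} (h : Rch G S u w) : Rch G S w u := by
  induction h with
  | refl => exact Relation.ReflTransGen.refl
  | tail _ h ih => exact Relation.ReflTransGen.head ⟨h.2.1, h.1, h.2.2.symm⟩ ih

lemma Rch.mono {S T : Set V} (hST : S ⊆ T) {u w : V} (h : Rch G S u w) : Rch G T u w :=
  Relation.ReflTransGen.mono (fun _ _ h => ⟨hST h.1, hST h.2.1, h.2.2⟩) _ _ h

lemma Rch.trans {S : Set V} {u v w : V} (h : Rch G S u v) (h' : Rch G S v w) : Rch G S u w :=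
  Relation.ReflTransGen.trans h h'

lemma Rch.mem {S : Set V} {u w : V} (h : Rch G S u w) (hu : u ∈ S) : w ∈ S := by
  induction h with
  | refl => exact hu
  | tail _ h _ => exact h.2.1

lemma Rch.step {S : Set V} {u v w : V} (h : Rch G S u v) (hv : v ∈ S) (hw : w ∈ S)
    (ha : G.Adj v w) : Rch G S u w :=
  Relation.ReflTransGen.tail h ⟨hv, hw, ha⟩

lemma Conn.joined {S : Set V} (h : Conn G S) {u w : V} (hu : u ∈ S) (hw : w ∈ S) :
    Rch G S u w := by
  obtain ⟨c, _, h⟩ := h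
  exact (h u hu).symm.trans (h w hw)

lemma self_mem_comp {T : Set V} {v : V} : v ∈ comp G T v := Relation.ReflTransGen.refl

lemma comp_not_mem {T : Set V} {v w : V} (hv : v ∉ T) (h : w ∈ comp G T v) : w ∉ T :=
  Rch.mem h hv

lemma comp_step {T : Set V} {v u w : V} (hv : v ∉ T) (h : u ∈ comp G T v) (hw : w ∉ T)
    (ha : G.Adj u w) : w ∈ comp G T v :=
  Rch.step h (comp_not_mem hv h) hw ha

lemma comp_anti {T U : Set V} (hTU : T ⊆ U) {v : V} : comp G U v ⊆ comp G T v :=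
  fun _ h => Rch.mono (Set.compl_subset_compl.2 hTU) h

lemma conn_comp {T : Set V} {v : V} : Conn G (comp G T v) := by
  refine ⟨v, self_mem_comp, fun w h => ?_⟩
  have h' : Rch G Tᶜ v w := h
  clear h
  induction h' with
  | refl => exact Relation.ReflTransGen.refl
  | tail h1 h2 ih => exact ih.step h1 (Relation.ReflTransGen.tail h1 h2) h2.2.2

/-- A component computed after deleting less either is unchanged at `w` or meets the difference. -/
lemma comp_hit {T U : Set V} {v w : V} (hv : v ∉ U) (h : w ∈ comp G T v) :
    w ∈ comp G U v ∨ ∃ c ∈ comp G U v, ∃ s ∈ U, s ∉ T ∧ G.Adj c s := by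
  have h' : Rch G Tᶜ v w := h
  clear h
  induction h' with
  | refl => exact Or.inl self_mem_comp
  | @tail b c _ h2 ih =>
    rcases ih with ih | ih
    · by_cases hc : c ∈ U
      · exact Or.inr ⟨b, ih, c, hc, h2.2.1, h2.2.2⟩
      · exact Or.inl (comp_step hv ih hc h2.2.2)
    · exact Or.inr ih

end Connectivity

section PlanarMinor

variable {V : Type*} {G : SimpleGraph V}

/-- The part of the drawing spanned by the vertex set `S`. -/
def drawn (E : PlaneEmbedding G) (S : Set V) : Set (ℝ × ℝ) :=
  {z | (∃ v ∈ S, z = E.pos v) ∨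
    ∃ u ∈ S, ∃ v ∈ S, G.Adj u v ∧ z ∈ E.arc u v '' Set.Icc 0 1}

lemma pos_mem_arc (E : PlaneEmbedding G) {u v w : V} (h : G.Adj u v)
    (hw : E.pos w ∈ E.arc u v '' Set.Icc 0 1) : w = u ∨ w = v := by
  obtain ⟨t, ht, e⟩ := hw
  rcases eq_or_lt_of_le ht.1 with h0 | h0
  · left; apply E.pos_inj; rw [← e, ← h0, E.arc_zero h]
  rcases eq_or_lt_of_le ht.2 with h1 | h1
  · right; apply E.pos_inj; rw [← e, h1, E.arc_one h]
  · exact absurd ⟨t, ⟨h0, h1⟩, e⟩ (E.arc_avoid h w)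

lemma drawn_disjoint (E : PlaneEmbedding G) {S T : Set V} (h : ∀ v ∈ S, v ∉ T) {z : ℝ × ℝ}
    (hS : z ∈ drawn E S) (hT : z ∈ drawn E T) : False := by
  rcases hS with ⟨v, hv, rfl⟩ | ⟨u, hu, v, hv, ha, hz⟩
  · rcases hT with ⟨v', hv', e⟩ | ⟨u', hu', v', hv', ha', hz'⟩
    · exact h v hv (E.pos_inj e ▸ hv')
    · rcases pos_mem_arc E ha' hz' with rfl | rfl
      · exact h _ hv hu'
      · exact h _ hv hv'
  · rcases hT with ⟨v', hv', rfl⟩ | ⟨u', hu', v', hv', ha', hz'⟩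
    · rcases pos_mem_arc E ha hz with rfl | rfl
      · exact h _ hu hv'
      · exact h _ hv hv'
    · have hne : s(u, v) ≠ s(u', v') := by
        intro e
        rw [Sym2.eq_iff] at e
        rcases e with ⟨rfl, _⟩ | ⟨rfl, _⟩
        · exact h _ hu hu'
        · exact h _ hu hv'
      have := E.arc_meet ha ha' hne ⟨hz, hz'⟩
      simp only [Set.mem_inter_iff, Set.mem_insert_iff, Set.mem_singleton_iff] at this
      obtain ⟨h1 | h1, h2 | h2⟩ := this <;> have := E.pos_inj (h1.symm.trans h2) <;> subst this
      · exact h _ hu hu'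
      · exact h _ hu hv'
      · exact h _ hv hu'
      · exact h _ hv hv'

lemma drawn_joined (E : PlaneEmbedding G) {S : Set V} {u w : V} (hu : u ∈ S) (h : Rch G S u w) :
    JoinedIn (drawn E S) (E.pos u) (E.pos w) := by
  induction h with
  | refl => exact JoinedIn.refl (Or.inl ⟨u, hu, rfl⟩)
  | @tail b c _ h ih =>
    refine ih.trans (JoinedIn.ofLine (f := E.arc b c) (E.arc_cont h.2.2).continuousOn
      (E.arc_zero h.2.2) (E.arc_one h.2.2) ?_)
    intro z hz
    exact Or.inr ⟨b, h.1, c, h.2.1, h.2.2, hz⟩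

theorem no_K33_minor (E : PlaneEmbedding G) (A B : Fin 3 → Set V)
    (hA : ∀ i, Conn G (A i)) (hB : ∀ j, Conn G (B j))
    (hAA : ∀ i i', i ≠ i' → ∀ v ∈ A i, v ∉ A i') (hBB : ∀ i i', i ≠ i' → ∀ v ∈ B i, v ∉ B i')
    (hAB : ∀ i j, ∀ v ∈ A i, v ∉ B j)
    (hadj : ∀ i j, ∃ u ∈ A i, ∃ w ∈ B j, G.Adj u w) : False := by
  choose a ha ha' using hA
  choose b hb hb' using hB
  have hj : ∀ i j, JoinedIn (drawn E (A i ∪ B j)) (E.pos (a i)) (E.pos (b j)) := by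
    intro i j
    apply drawn_joined E (Or.inl (ha i))
    obtain ⟨u, hu, w, hw, h⟩ := hadj i j
    have h1 := Rch.mono (T := A i ∪ B j) Set.subset_union_left (ha' i u hu)
    have h2 := Rch.mono (T := A i ∪ B j) Set.subset_union_right (hb' j w hw)
    exact (h1.step (Or.inl hu) (Or.inr hw) h).trans h2.symm
  let e := Complex.equivRealProdCLM.symm
  refine no_K33_drawing (fun i => e (E.pos (a i))) (fun j => e (E.pos (b j)))
    (fun i j => (hj i j).somePath.map e.continuous) ?_
  intro i j i' j' hi hj' s t hst
  have h1 := (hj i j).somePath_mem s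
  have h2 := (hj i' j').somePath_mem t
  have h3 : (hj i j).somePath s = (hj i' j').somePath t := e.injective (by simpa using hst)
  rw [← h3] at h2
  refine drawn_disjoint E ?_ h1 h2
  rintro v (hv | hv) (hv' | hv')
  · exact hAA i i' hi v hv hv'
  · exact hAB i j' v hv hv'
  · exact hAB i' j v hv' hv
  · exact hBB j j' hj' v hv hv'

theorem no_K33_minor' (E : PlaneEmbedding G) (A₁ A₂ A₃ B₁ B₂ B₃ : Set V)
    (hA : Conn G A₁ ∧ Conn G A₂ ∧ Conn G A₃) (hB : Conn G B₁ ∧ Conn G B₂ ∧ Conn G B₃)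
    (hAA : ∀ v, ¬ (v ∈ A₁ ∧ v ∈ A₂) ∧ ¬ (v ∈ A₁ ∧ v ∈ A₃) ∧ ¬ (v ∈ A₂ ∧ v ∈ A₃))
    (hBB : ∀ v, ¬ (v ∈ B₁ ∧ v ∈ B₂) ∧ ¬ (v ∈ B₁ ∧ v ∈ B₃) ∧ ¬ (v ∈ B₂ ∧ v ∈ B₃))
    (hAB : ∀ v, (v ∈ A₁ ∨ v ∈ A₂ ∨ v ∈ A₃) → ¬ (v ∈ B₁ ∨ v ∈ B₂ ∨ v ∈ B₃))
    (h11 : ∃ u ∈ A₁, ∃ w ∈ B₁, G.Adj u w) (h12 : ∃ u ∈ A₁, ∃ w ∈ B₂, G.Adj u w)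
    (h13 : ∃ u ∈ A₁, ∃ w ∈ B₃, G.Adj u w) (h21 : ∃ u ∈ A₂, ∃ w ∈ B₁, G.Adj u w)
    (h22 : ∃ u ∈ A₂, ∃ w ∈ B₂, G.Adj u w) (h23 : ∃ u ∈ A₂, ∃ w ∈ B₃, G.Adj u w)
    (h31 : ∃ u ∈ A₃, ∃ w ∈ B₁, G.Adj u w) (h32 : ∃ u ∈ A₃, ∃ w ∈ B₂, G.Adj u w)
    (h33 : ∃ u ∈ A₃, ∃ w ∈ B₃, G.Adj u w) : False := by
  refine no_K33_minor E ![A₁, A₂, A₃] ![B₁, B₂, B₃] ?_ ?_ ?_ ?_ ?_ ?_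
  · intro i; fin_cases i; exacts [hA.1, hA.2.1, hA.2.2]
  · intro i; fin_cases i; exacts [hB.1, hB.2.1, hB.2.2]
  · intro i i' hi v hv hv'
    have := hAA v
    fin_cases i <;> fin_cases i' <;> simp at hi hv hv' <;> tauto
  · intro i i' hi v hv hv'
    have := hBB v
    fin_cases i <;> fin_cases i' <;> simp at hi hv hv' <;> tauto
  · intro i j v hv hv'
    have := hAB v
    fin_cases i <;> fin_cases j <;> simp at hv hv' <;> tauto
  · intro i j
    fin_cases i <;> fin_cases j
    exacts [h11, h12, h13, h21, h22, h23, h31, h32, h33]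

end PlanarMinor

section Tree

/-- A breadth-first tree rooted at the vertex `r` of degree three. -/
structure BT {V : Type*} (G : SimpleGraph V) (r : V) where
  par : V → V
  d : V → ℕ
  nb : Fin 3 → V
  nb_inj : Function.Injective nb
  adj_r : ∀ w, G.Adj r w ↔ ∃ i, w = nb i
  d_r : d r = 0
  d_zero : ∀ v, d v = 0 → v = r
  par_adj : ∀ v, v ≠ r → G.Adj v (par v)
  par_d : ∀ v, v ≠ r → d (par v) + 1 = d v
  d_adj : ∀ u v, G.Adj u v → d v ≤ d u + 1

variable {V : Type*} {G : SimpleGraph V} {r : V}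

namespace BT

/-- One step up the tree, not reaching the root. -/
def Up (T : BT G r) (u v : V) : Prop := u ≠ r ∧ T.par u = v ∧ v ≠ r

/-- The tree path from `x` up to the child of the root. -/
def P (T : BT G r) (x : V) : Set V := {w | Relation.ReflTransGen T.Up x w}

/-- The branches of the tree. -/
def D (T : BT G r) (i : Fin 3) : Set V := {x | x ≠ r ∧ T.nb i ∈ T.P x}

variable (T : BT G r)

lemma self_P (x : V) : x ∈ T.P x := Relation.ReflTransGen.refl

lemma P_sub {x w : V} (h : w ∈ T.P x) : T.P w ⊆ T.P x := fun _ h' => Relation.ReflTransGen.trans h h'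

lemma P_ne {x w : V} (hx : x ≠ r) (h : w ∈ T.P x) : w ≠ r := by
  have h' : Relation.ReflTransGen T.Up x w := h
  cases h' with
  | refl => exact hx
  | tail _ h => exact h.2.2

lemma P_chain {x u w : V} (hu : u ∈ T.P x) (hw : w ∈ T.P x) : w ∈ T.P u ∨ u ∈ T.P w :=
  Relation.ReflTransGen.total_of_right_unique
    (fun _ _ _ h h' => h.2.1.symm.trans h'.2.1) hu hw

lemma P_d {x w : V} (h : w ∈ T.P x) : w = x ∨ T.d w < T.d x := by
  have h' : Relation.ReflTransGen T.Up x w := h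
  clear h
  induction h' with
  | refl => exact Or.inl rfl
  | tail _ h ih =>
    right
    have := T.par_d _ h.1
    rw [h.2.1] at this
    rcases ih with rfl | ih <;> omega

lemma P_inj {x u w : V} (hu : u ∈ T.P x) (hw : w ∈ T.P x) (h : T.d u = T.d w) : u = w := by
  rcases T.P_chain hu hw with h1 | h1 <;> rcases T.P_d h1 with h2 | h2
  · exact h2.symm
  · omega
  · exact h2
  · omega

lemma nb_adj (i : Fin 3) : G.Adj r (T.nb i) := (T.adj_r _).2 ⟨i, rfl⟩

lemma nb_ne (i : Fin 3) : T.nb i ≠ r := (T.nb_adj i).ne'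

lemma nb_d (i : Fin 3) : T.d (T.nb i) = 1 := by
  have h1 := T.d_adj _ _ (T.nb_adj i)
  have h2 := T.d_zero (T.nb i)
  have h3 := T.nb_ne i
  rw [T.d_r] at h1
  by_contra h
  exact h3 (h2 (by omega))

lemma nb_D (i : Fin 3) : T.nb i ∈ T.D i := ⟨T.nb_ne i, T.self_P _⟩

lemma D_cover (x : V) (hx : x ≠ r) : ∃ i, x ∈ T.D i := by
  induction h : T.d x using Nat.strong_induction_on generalizing x with
  | _ n ih =>
    have h1 := T.par_d x hx
    by_cases hp : T.par x = r
    · have := T.par_adj x hx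
      rw [hp] at this
      obtain ⟨i, rfl⟩ := (T.adj_r x).1 this.symm
      exact ⟨i, T.nb_D i⟩
    · obtain ⟨i, hi⟩ := ih (T.d (T.par x)) (by omega) (T.par x) hp rfl
      exact ⟨i, hx, Relation.ReflTransGen.head ⟨hx, rfl, hp⟩ hi.2⟩

lemma D_unique {x : V} {i j : Fin 3} (hi : x ∈ T.D i) (hj : x ∈ T.D j) : i = j :=
  T.nb_inj (T.P_inj hi.2 hj.2 (by rw [nb_d, nb_d]))

lemma P_D {x w : V} {i : Fin 3} (hx : x ∈ T.D i) (hw : w ∈ T.P x) : w ∈ T.D i := by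
  have hwr := T.P_ne hx.1 hw
  refine ⟨hwr, ?_⟩
  rcases T.P_chain hw hx.2 with h | h
  · exact h
  · rcases T.P_d h with h' | h'
    · rw [h']; exact T.self_P _
    · rw [nb_d] at h'
      exact absurd (T.d_zero w (by omega)) hwr

/-- Up-closed sets inside a branch are connected to the top. -/
lemma rch_top {S : Set V} {i : Fin 3} (hS : ∀ w ∈ S, T.P w ⊆ S) {w : V} (hw : w ∈ S)
    (hi : w ∈ T.D i) : Rch G S w (T.nb i) := by
  have key : ∀ u, Relation.ReflTransGen T.Up w u → Rch G S w u := by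
    intro u h
    induction h with
    | refl => exact Relation.ReflTransGen.refl
    | @tail b c h1 h2 ih =>
      refine ih.step (hS w hw h1) (hS w hw (Relation.ReflTransGen.tail h1 h2)) ?_
      rw [← h2.2.1]; exact T.par_adj _ h2.1
  exact key _ hi.2

lemma rch_bot {S : Set V} (hS : ∀ w ∈ S, T.P w ⊆ S) {x w : V} (hw : w ∈ T.P x) (hwS : w ∉ S) :
    Rch G (T.P x \ S) x w := by
  have h' : Relation.ReflTransGen T.Up x w := hw
  clear hw
  induction h' with
  | refl => exact Relation.ReflTransGen.refl
  | @tail b c h1 h2 ih =>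
    have hb : b ∉ S := fun hb => hwS (hS b hb (Relation.ReflTransGen.single h2))
    refine (ih hb).step ⟨h1, hb⟩ ⟨Relation.ReflTransGen.tail h1 h2, hwS⟩ ?_
    rw [← h2.2.1]; exact T.par_adj _ h2.1

lemma bot_not_mem {S : Set V} (hS : ∀ w ∈ S, T.P w ⊆ S) {x w : V} (hw : w ∈ T.P x) (hwS : w ∉ S) :
    x ∉ S := fun h => hwS (hS x h hw)

lemma cross_edge {S : Set V} {x w : V} (hw : w ∈ T.P x) (hx : x ∉ S) (hwS : w ∈ S) :
    ∃ a ∈ T.P x \ S, ∃ b ∈ T.P x ∩ S, G.Adj a b := by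
  have h' : Relation.ReflTransGen T.Up x w := hw
  clear hw
  induction h' with
  | refl => exact absurd hwS hx
  | @tail b c h1 h2 ih =>
    by_cases hb : b ∈ S
    · exact ih hb
    · refine ⟨b, ⟨h1, hb⟩, c, ⟨Relation.ReflTransGen.tail h1 h2, hwS⟩, ?_⟩
      rw [← h2.2.1]; exact T.par_adj _ h2.1

lemma P_up (x : V) : ∀ w ∈ T.P x, T.P w ⊆ T.P x := fun _ h => T.P_sub h

lemma conn_inter {x x' : V} {i : Fin 3} (hx : x ∈ T.D i) (hx' : x' ∈ T.D i) :
    Conn G (T.P x ∩ T.P x') := by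
  refine ⟨T.nb i, ⟨hx.2, hx'.2⟩, fun w hw => (T.rch_top ?_ hw (T.P_D hx hw.1)).symm⟩
  exact fun w hw => Set.subset_inter (T.P_sub hw.1) (T.P_sub hw.2)

lemma conn_diff {x x' w : V} (hw : w ∈ T.P x) (hw' : w ∉ T.P x') :
    Conn G (T.P x \ T.P x') :=
  ⟨x, ⟨T.self_P x, T.bot_not_mem (T.P_up x') hw hw'⟩,
    fun _ h => T.rch_bot (T.P_up x') h.1 h.2⟩

/-- The segment `S` of the first non-planarity argument. -/
def seg (x y x' y' : V) : Set V := (T.P x \ T.P x') ∪ (T.P y \ T.P y')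

lemma seg_swap (x y x' y' : V) : T.seg x y x' y' = T.seg y x y' x' := Set.union_comm _ _

lemma conn_seg {x y x' y' : V} (ha : G.Adj x y) (hne : (T.seg x y x' y').Nonempty) :
    Conn G (T.seg x y x' y') := by
  have ux := T.P_up x'
  have uy := T.P_up y'
  have key1 : ∀ w ∈ T.P x \ T.P x', Rch G (T.seg x y x' y') x w := fun w hw =>
    (T.rch_bot ux hw.1 hw.2).mono Set.subset_union_left
  have key2 : ∀ w ∈ T.P y \ T.P y', Rch G (T.seg x y x' y') y w := fun w hw =>
    (T.rch_bot uy hw.1 hw.2).mono Set.subset_union_right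
  by_cases hx : x ∈ T.P x'
  · have hy : y ∉ T.P y' := by
      obtain ⟨w, hw | hw⟩ := hne
      · exact absurd hx (T.bot_not_mem ux hw.1 hw.2)
      · exact T.bot_not_mem uy hw.1 hw.2
    refine ⟨y, Or.inr ⟨T.self_P y, hy⟩, ?_⟩
    rintro w (hw | hw)
    · exact absurd hx (T.bot_not_mem ux hw.1 hw.2)
    · exact key2 w hw
  · have hxs : x ∈ T.seg x y x' y' := Or.inl ⟨T.self_P x, hx⟩
    refine ⟨x, hxs, ?_⟩
    rintro w (hw | hw)
    · exact key1 w hw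
    · have hy : y ∈ T.seg x y x' y' := Or.inr ⟨T.self_P y, T.bot_not_mem uy hw.1 hw.2⟩
      exact (Relation.ReflTransGen.single ⟨hxs, hy, ha⟩ : Rch G _ x y).trans (key2 w hw)

lemma seg_adj {x y x' y' : V} {i : Fin 3} (hx : x ∈ T.D i) (hx' : x' ∈ T.D i) (ha : G.Adj x y)
    (hne : (T.seg x y x' y').Nonempty) :
    ∃ a ∈ T.seg x y x' y', ∃ b ∈ T.P x ∩ T.P x', G.Adj a b := by
  by_cases h : x ∈ T.P x'
  · obtain ⟨w, hw | hw⟩ := hne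
    · exact absurd h (T.bot_not_mem (T.P_up x') hw.1 hw.2)
    · exact ⟨y, Or.inr ⟨T.self_P y, T.bot_not_mem (T.P_up y') hw.1 hw.2⟩, x,
        ⟨T.self_P x, h⟩, ha.symm⟩
  · obtain ⟨a, ha, b, hb, hab⟩ := T.cross_edge hx.2 h hx'.2
    exact ⟨a, Or.inl ha, b, hb, hab⟩

/-- The set deleted by the paths to `x` and `y`. -/
def cut (x y : V) : Set V := {r} ∪ T.P x ∪ T.P y

/-- The side of the third branch `k`. -/
def Out (x y : V) (k : Fin 3) : Set V := comp G (T.cut x y) (T.nb k)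

lemma nb_not_P {x : V} {i k : Fin 3} (hx : x ∈ T.D i) (hik : i ≠ k) : T.nb k ∉ T.P x :=
  fun h => hik (T.D_unique (T.P_D hx h) (T.nb_D k))

lemma nb_not_cut {x y : V} {i j k : Fin 3} (hx : x ∈ T.D i) (hy : y ∈ T.D j) (hik : i ≠ k)
    (hjk : j ≠ k) : T.nb k ∉ T.cut x y := by
  rintro ((h | h) | h)
  · exact T.nb_ne k h
  · exact T.nb_not_P hx hik h
  · exact T.nb_not_P hy hjk h

lemma D_sub_comp {S : Set V} {k : Fin 3} (hS : ∀ w ∈ T.D k, w ∉ S) :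
    T.D k ⊆ comp G S (T.nb k) := by
  intro w hw
  have := T.rch_top (S := T.D k) (fun w hw u hu => T.P_D hw hu) hw hw
  exact (this.symm).mono (fun u hu => hS u hu)

lemma D_sub_Out {x y : V} {i j k : Fin 3} (hx : x ∈ T.D i) (hy : y ∈ T.D j) (hik : i ≠ k)
    (hjk : j ≠ k) : T.D k ⊆ T.Out x y k := by
  apply T.D_sub_comp
  rintro w hw ((h | h) | h)
  · exact hw.1 h
  · exact hik (T.D_unique (T.P_D hx h) hw)
  · exact hjk (T.D_unique (T.P_D hy h) hw)

lemma crossing (E : PlaneEmbedding G) {i j k : Fin 3} (hij : i ≠ j) (hik : i ≠ k) (hjk : j ≠ k)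
    {x y x' y' : V} (hx : x ∈ T.D i) (hy : y ∈ T.D j) (hx' : x' ∈ T.D i) (hy' : y' ∈ T.D j)
    (ha : G.Adj x y) (ha' : G.Adj x' y') (hout : x' ∈ T.Out x y k ∨ y' ∈ T.Out x y k) :
    T.Out x' y' k ⊂ T.Out x y k := by
  have hk := T.nb_not_cut hx hy hik hjk
  have hk' := T.nb_not_cut hx' hy' hik hjk
  set U := T.cut x y ∪ T.cut x' y' with hU
  have hkU : T.nb k ∉ U := by rintro (h | h) <;> contradiction
  by_cases hsub : ∀ w ∈ T.Out x' y' k, w ∉ T.P x ∧ w ∉ T.P y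
  · have h1 : T.Out x' y' k ⊆ T.Out x y k := by
      intro w hw
      rcases comp_hit (T := T.cut x' y') hkU hw with h | ⟨c, hc, s, hs, hs', hcs⟩
      · exact comp_anti Set.subset_union_left h
      · have hsO : s ∈ T.Out x' y' k := comp_step hk' (comp_anti Set.subset_union_right hc) hs' hcs
        have := hsub s hsO
        rcases hs with ((h | h) | h) | h
        · exact absurd (Or.inl (Or.inl h)) hs'
        · exact absurd h this.1
        · exact absurd h this.2
        · exact absurd h hs'
    refine ⟨h1, fun h2 => ?_⟩
    rcases hout with h | h
    · exact comp_not_mem hk' (h2 h) (Or.inl (Or.inr (T.self_P x')))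
    · exact comp_not_mem hk' (h2 h) (Or.inr (T.self_P y'))
  · exfalso
    push Not at hsub
    obtain ⟨w, hw, hw2⟩ := hsub
    have hwP : w ∈ T.P x ∨ w ∈ T.P y := by tauto
    have hwU : w ∈ U := by
      rcases hwP with h | h
      · exact Or.inl (Or.inl (Or.inr h))
      · exact Or.inl (Or.inr h)
    -- the third region meets the segment of the first edge
    have hS : ∃ c ∈ comp G U (T.nb k), ∃ s ∈ T.seg x y x' y', G.Adj c s := by
      rcases comp_hit (T := T.cut x' y') hkU hw with h | ⟨c, hc, s, hs, hs', hcs⟩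
      · exact absurd hwU (comp_not_mem hkU h)
      · refine ⟨c, hc, s, ?_, hcs⟩
        have a1 : s ∉ T.P x' := fun h => hs' (Or.inl (Or.inr h))
        have a2 : s ∉ T.P y' := fun h => hs' (Or.inr h)
        rcases hs with ((h | h) | h) | h
        · exact absurd (Or.inl (Or.inl h)) hs'
        · exact Or.inl ⟨h, a1⟩
        · exact Or.inr ⟨h, a2⟩
        · exact absurd h hs'
    have hS' : ∃ c ∈ comp G U (T.nb k), ∃ s ∈ T.seg x' y' x y, G.Adj c s := by
      have : ∃ w ∈ T.Out x y k, w ∈ U := by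
        rcases hout with h | h
        · exact ⟨x', h, Or.inr (Or.inl (Or.inr (T.self_P x')))⟩
        · exact ⟨y', h, Or.inr (Or.inr (T.self_P y'))⟩
      obtain ⟨w, hw, hwU⟩ := this
      rcases comp_hit (T := T.cut x y) hkU hw with h | ⟨c, hc, s, hs, hs', hcs⟩
      · exact absurd hwU (comp_not_mem hkU h)
      · refine ⟨c, hc, s, ?_, hcs⟩
        have a1 : s ∉ T.P x := fun h => hs' (Or.inl (Or.inr h))
        have a2 : s ∉ T.P y := fun h => hs' (Or.inr h)
        rcases hs with h | (h | h) | h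
        · exact absurd h hs'
        · exact absurd (Or.inl (Or.inl h)) hs'
        · exact Or.inl ⟨h, a1⟩
        · exact Or.inr ⟨h, a2⟩
    obtain ⟨c, hc, s, hs, hcs⟩ := hS
    obtain ⟨c', hc', s', hs', hcs'⟩ := hS'
    have hPij : ∀ v, (v ∈ T.P x ∨ v ∈ T.P x') → ¬ (v ∈ T.P y ∨ v ∈ T.P y') := by
      intro v h1 h2
      refine hij (T.D_unique (x := v) ?_ ?_)
      · rcases h1 with h | h; exacts [T.P_D hx h, T.P_D hx' h]
      · rcases h2 with h | h; exacts [T.P_D hy h, T.P_D hy' h]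
    have hPr : ∀ v, (v ∈ T.P x ∨ v ∈ T.P x' ∨ v ∈ T.P y ∨ v ∈ T.P y') → v ≠ r := by
      rintro v (h | h | h | h)
      exacts [T.P_ne hx.1 h, T.P_ne hx'.1 h, T.P_ne hy.1 h, T.P_ne hy'.1 h]
    have hC : ∀ v ∈ comp G U (T.nb k), v ≠ r ∧ v ∉ T.P x ∧ v ∉ T.P y ∧ v ∉ T.P x' ∧ v ∉ T.P y' := by
      intro v hv
      have := comp_not_mem hkU hv
      simp only [hU, cut, Set.mem_union, Set.mem_singleton_iff] at this
      tauto
    obtain ⟨e1, he1, f1, hf1, g1⟩ := T.seg_adj hx hx' ha ⟨s, hs⟩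
    obtain ⟨e2, he2, f2, hf2, g2⟩ := T.seg_adj hx' hx ha' ⟨s', hs'⟩
    obtain ⟨e3, he3, f3, hf3, g3⟩ := T.seg_adj hy hy' ha.symm
      ⟨s, by rw [T.seg_swap]; exact hs⟩
    obtain ⟨e4, he4, f4, hf4, g4⟩ := T.seg_adj hy' hy ha'.symm
      ⟨s', by rw [T.seg_swap]; exact hs'⟩
    rw [T.seg_swap] at he3 he4
    refine no_K33_minor' E {r} (T.seg x y x' y') (T.seg x' y' x y)
      (T.P x ∩ T.P x') (T.P y ∩ T.P y') (comp G U (T.nb k))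
      ⟨⟨r, rfl, fun w hw => by rw [Set.mem_singleton_iff.1 hw]; exact Relation.ReflTransGen.refl⟩,
        T.conn_seg ha ⟨s, hs⟩, T.conn_seg ha' ⟨s', hs'⟩⟩
      ⟨T.conn_inter hx hx', T.conn_inter hy hy', conn_comp⟩ ?_ ?_ ?_
      ⟨r, rfl, _, ⟨hx.2, hx'.2⟩, T.nb_adj i⟩ ⟨r, rfl, _, ⟨hy.2, hy'.2⟩, T.nb_adj j⟩
      ⟨r, rfl, _, self_mem_comp, T.nb_adj k⟩
      ⟨e1, he1, f1, hf1, g1⟩ ⟨e3, he3, f3, hf3, g3⟩ ⟨s, hs, c, hc, hcs.symm⟩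
      ⟨e2, he2, f2, ⟨hf2.2, hf2.1⟩, g2⟩ ⟨e4, he4, f4, ⟨hf4.2, hf4.1⟩, g4⟩
      ⟨s', hs', c', hc', hcs'.symm⟩
    · intro v
      have b1 := hPij v
      have b2 := hPr v
      simp only [seg, Set.mem_union, Set.mem_sdiff, Set.mem_singleton_iff]
      clear * - b1 b2
      grind only
    · intro v
      have b1 := hPij v
      have b2 := hC v
      simp only [Set.mem_inter_iff]
      clear * - b1 b2
      grind only
    · intro v
      have b1 := hPij v
      have b2 := hC v
      have b3 := hPr v
      simp only [seg, Set.mem_union, Set.mem_sdiff, Set.mem_singleton_iff, Set.mem_inter_iff]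
      clear * - b1 b2 b3
      grind only

/-- An outermost edge between the branches `i` and `j`, seen from branch `k`. -/
structure Good (i j k : Fin 3) (x y : V) : Prop where
  hx : x ∈ T.D i
  hy : y ∈ T.D j
  hadj : (∃ u ∈ T.D i, ∃ w ∈ T.D j, G.Adj u w) → G.Adj x y
  hout : ∀ u ∈ T.D i, ∀ w ∈ T.D j, G.Adj u w → u ∉ T.Out x y k ∧ w ∉ T.Out x y k

lemma Out_swap (x y : V) (k : Fin 3) : T.Out x y k = T.Out y x k := by
  unfold Out cut
  rw [Set.union_assoc, Set.union_comm (T.P x), ← Set.union_assoc]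

variable {T} in
lemma Good.symm {i j k : Fin 3} {x y : V} (h : T.Good i j k x y) : T.Good j i k y x where
  hx := h.hy
  hy := h.hx
  hadj := fun ⟨u, hu, w, hw, a⟩ => (h.hadj ⟨w, hw, u, hu, a.symm⟩).symm
  hout := fun u hu w hw a => by
    rw [T.Out_swap]
    exact (h.hout w hw u hu a.symm).symm

lemma exists_good [Finite V] (E : PlaneEmbedding G) {i j k : Fin 3} (hij : i ≠ j) (hik : i ≠ k)
    (hjk : j ≠ k) : ∃ x y, T.Good i j k x y := by
  by_cases hex : ∃ u ∈ T.D i, ∃ w ∈ T.D j, G.Adj u w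
  · let S : Set (V × V) := {p | p.1 ∈ T.D i ∧ p.2 ∈ T.D j ∧ G.Adj p.1 p.2}
    have hS : S.Nonempty := by
      obtain ⟨u, hu, w, hw, a⟩ := hex
      exact ⟨(u, w), hu, hw, a⟩
    obtain ⟨⟨x, y⟩, ⟨hx, hy, ha⟩, hmin⟩ :=
      Set.exists_min_image S (fun p => (T.Out p.1 p.2 k).ncard) S.toFinite hS
    refine ⟨x, y, hx, hy, fun _ => ha, fun u hu w hw a => ?_⟩
    by_contra hcon
    have := T.crossing E hij hik hjk hx hy hu hw ha a (by tauto)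
    have h1 := Set.ncard_lt_ncard this
    have h2 : (T.Out x y k).ncard ≤ (T.Out u w k).ncard := hmin (u, w) ⟨hu, hw, a⟩
    exact absurd h1 (not_lt.2 h2)
  · exact ⟨T.nb i, T.nb j, T.nb_D i, T.nb_D j, fun h => absurd h hex,
      fun u hu w hw a => absurd ⟨u, hu, w, hw, a⟩ hex⟩

/-- Vertices reachable from branch `k` within branches `i`, `k`, avoiding the path to `x`. -/
def Ex (x : V) (j k : Fin 3) : Set V := comp G ({r} ∪ T.P x ∪ T.D j) (T.nb k)

lemma nb_not_Ex {x : V} {i j k : Fin 3} (hx : x ∈ T.D i) (hik : i ≠ k) (hjk : j ≠ k) :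
    T.nb k ∉ {r} ∪ T.P x ∪ T.D j := by
  rintro ((h | h) | h)
  · exact T.nb_ne k h
  · exact T.nb_not_P hx hik h
  · exact hjk (T.D_unique h (T.nb_D k))

lemma fin3 : ∀ i j k l : Fin 3, i ≠ j → i ≠ k → j ≠ k → l = i ∨ l = j ∨ l = k := by decide

lemma not_out_step {i j k : Fin 3} {x y : V} (g : T.Good i k j x y) (hik : i ≠ k) (hij : i ≠ j)
    (hjk : j ≠ k) {u w : V} (hu : u ∈ T.D i) (hux : u ∉ T.P x) (huo : u ∉ T.Out x y j)
    (a : G.Adj u w) : w ∉ T.Out x y j := by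
  intro hw
  apply huo
  refine comp_step (T.nb_not_cut g.hx g.hy hij hjk.symm) hw ?_ a.symm
  rintro ((h | h) | h)
  · exact hu.1 h
  · exact hux h
  · exact hik (T.D_unique hu (T.P_D g.hy h))

lemma Ex_sub {i j k : Fin 3} {x y : V} (g : T.Good i k j x y) (hik : i ≠ k) (hij : i ≠ j)
    (hjk : j ≠ k) {w : V} (hw : w ∈ T.Ex x j k) :
    w ∈ T.D k ∨ (w ∈ T.D i ∧ w ∉ T.Out x y j ∧ G.Adj x y) := by
  have hk := T.nb_not_Ex g.hx hik hjk
  have h' : Rch G _ _ w := hw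
  clear hw
  induction h' with
  | refl => exact Or.inl (T.nb_D k)
  | @tail u w h1 h2 ih =>
    have hu := h2.1
    have hw := h2.2.1
    have a := h2.2.2
    obtain ⟨l, hl⟩ := T.D_cover w (fun e => hw (Or.inl (Or.inl e)))
    rcases fin3 i j k l hij hik hjk with rfl | rfl | rfl
    · right
      rcases ih with ih | ih
      · exact ⟨hl, (g.hout w hl u ih a.symm).1, g.hadj ⟨w, hl, u, ih, a.symm⟩⟩
      · exact ⟨hl, T.not_out_step g hik hij hjk ih.1 (fun h => hu (Or.inl (Or.inr h))) ih.2.1 a,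
          ih.2.2⟩
    · exact absurd (Or.inr hl) hw
    · exact Or.inl hl

/-- The burning set of the strategy is controlled. -/
lemma burn_sub {i j k : Fin 3} {x y x' y' : V} (g : T.Good i k j x y) (g' : T.Good j k i x' y')
    (hik : i ≠ k) (hij : i ≠ j) (hjk : j ≠ k) {w : V} (hw : w ∈ comp G (T.cut x x') (T.nb k)) :
    w ∈ T.D k ∨ (w ∈ T.D i ∧ w ∈ T.Ex x j k) ∨ (w ∈ T.D j ∧ w ∈ T.Ex x' i k) := by
  have hk := T.nb_not_Ex g.hx hik hjk
  have hk' := T.nb_not_Ex g'.hx hjk hik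
  have hD : T.D k ⊆ T.Ex x j k := by
    apply T.D_sub_comp
    rintro w hw ((h | h) | h)
    · exact hw.1 h
    · exact hik (T.D_unique (T.P_D g.hx h) hw)
    · exact hjk (T.D_unique h hw)
  have hD' : T.D k ⊆ T.Ex x' i k := by
    apply T.D_sub_comp
    rintro w hw ((h | h) | h)
    · exact hw.1 h
    · exact hjk (T.D_unique (T.P_D g'.hx h) hw)
    · exact hik (T.D_unique h hw)
  have h' : Rch G _ _ w := hw
  clear hw
  induction h' with
  | refl => exact Or.inl (T.nb_D k)
  | @tail u w h1 h2 ih =>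
    have hw := h2.2.1
    have a := h2.2.2
    have hwr : w ≠ r := fun e => hw (Or.inl (Or.inl e))
    have hwx : w ∉ T.P x := fun e => hw (Or.inl (Or.inr e))
    have hwx' : w ∉ T.P x' := fun e => hw (Or.inr e)
    have hux : u ∉ T.P x := fun e => h2.1 (Or.inl (Or.inr e))
    have hux' : u ∉ T.P x' := fun e => h2.1 (Or.inr e)
    obtain ⟨l, hl⟩ := T.D_cover w hwr
    have step1 : u ∈ T.Ex x j k → w ∈ T.D i → w ∈ T.Ex x j k := fun hu hl =>
      comp_step hk hu (by
        rintro ((h | h) | h)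
        · exact hwr h
        · exact hwx h
        · exact hij (T.D_unique hl h)) a
    have step2 : u ∈ T.Ex x' i k → w ∈ T.D j → w ∈ T.Ex x' i k := fun hu hl =>
      comp_step hk' hu (by
        rintro ((h | h) | h)
        · exact hwr h
        · exact hwx' h
        · exact hij (T.D_unique h hl)) a
    rcases fin3 i j k l hij hik hjk with rfl | rfl | rfl
    · right; left
      refine ⟨hl, ?_⟩
      rcases ih with ih | ih | ih
      · exact step1 (hD ih) hl
      · exact step1 ih.2 hl
      · exfalso
        rcases T.Ex_sub g' hjk hij.symm hik ih.2 with h | h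
        · exact hjk (T.D_unique ih.1 h)
        · exact T.not_out_step g' hjk hij.symm hik ih.1 hux' h.2.1 a
            (T.D_sub_Out g'.hx g'.hy hij.symm hik.symm hl)
    · right; right
      refine ⟨hl, ?_⟩
      rcases ih with ih | ih | ih
      · exact step2 (hD' ih) hl
      · exfalso
        rcases T.Ex_sub g hik hij hjk ih.2 with h | h
        · exact hik (T.D_unique ih.1 h)
        · exact T.not_out_step g hik hij hjk ih.1 hux h.2.1 a
            (T.D_sub_Out g.hx g.hy hij hjk.symm hl)
      · exact step2 ih.2 hl
    · exact Or.inl hl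

/-- Half of the second non-planarity argument. -/
lemma half {i j k : Fin 3} {x y p q : V} (g : T.Good i k j x y) (g' : T.Good i j k p q)
    (hik : i ≠ k) (hij : i ≠ j) (hjk : j ≠ k) {z : V} (hz : z ∈ T.D i) (h1 : z ∈ T.Ex x j k)
    (h2 : z ∈ T.Ex p k j) :
    ∃ c ∈ comp G ({r} ∪ T.P x ∪ T.P p ∪ T.D j) (T.nb k), ∃ s ∈ T.P p \ T.P x, G.Adj c s := by
  have hkU : T.nb k ∉ {r} ∪ T.P x ∪ T.P p ∪ T.D j := by
    rintro (((h | h) | h) | h)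
    · exact T.nb_ne k h
    · exact T.nb_not_P g.hx hik h
    · exact T.nb_not_P g'.hx hik h
    · exact hjk (T.D_unique h (T.nb_D k))
  rcases comp_hit hkU h1 with h | ⟨c, hc, s, hs, hs', hcs⟩
  · exfalso
    have hzo : z ∈ T.Out p q k := by
      refine comp_anti ?_ h
      rintro w ((hw | hw) | hw)
      · exact Or.inl (Or.inl (Or.inl hw))
      · exact Or.inl (Or.inr hw)
      · exact Or.inr (T.P_D g'.hy hw)
    rcases T.Ex_sub g' hij hik hjk.symm h2 with h | h
    · exact hij (T.D_unique hz h)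
    · exact h.2.1 hzo
  · refine ⟨c, hc, s, ?_, hcs⟩
    simp only [Set.mem_union] at hs hs'
    simp only [Set.mem_sdiff]
    tauto

lemma no_double (E : PlaneEmbedding G) {i j k : Fin 3} {x y p q : V} (g : T.Good i k j x y)
    (g' : T.Good i j k p q) (hik : i ≠ k) (hij : i ≠ j) (hjk : j ≠ k) {z : V} (hz : z ∈ T.D i)
    (h1 : z ∈ T.Ex x j k) (h2 : z ∈ T.Ex p k j) : False := by
  obtain ⟨c3, hc3, s3, hs3, e3⟩ := T.half g g' hik hij hjk hz h1 h2
  obtain ⟨c2, hc2, s2, hs2, e2⟩ := T.half g' g hij hik hjk.symm hz h2 h1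
  have axy : G.Adj x y := by
    rcases T.Ex_sub g hik hij hjk h1 with h | h
    · exact absurd (T.D_unique hz h) hik
    · exact h.2.2
  have apq : G.Adj p q := by
    rcases T.Ex_sub g' hij hik hjk.symm h2 with h | h
    · exact absurd (T.D_unique hz h) hij
    · exact h.2.2
  have hp : p ∉ T.P x := T.bot_not_mem (T.P_up x) hs3.1 hs3.2
  have hx : x ∉ T.P p := T.bot_not_mem (T.P_up p) hs2.1 hs2.2
  set C3 := comp G ({r} ∪ T.P x ∪ T.P p ∪ T.D j) (T.nb k) with hC3
  set C2 := comp G ({r} ∪ T.P p ∪ T.P x ∪ T.D k) (T.nb j) with hC2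
  have hD3 : T.D k ⊆ C3 := by
    apply T.D_sub_comp
    rintro w hw (((h | h) | h) | h)
    · exact hw.1 h
    · exact hik (T.D_unique (T.P_D g.hx h) hw)
    · exact hik (T.D_unique (T.P_D g'.hx h) hw)
    · exact hjk (T.D_unique h hw)
  have hD2 : T.D j ⊆ C2 := by
    apply T.D_sub_comp
    rintro w hw (((h | h) | h) | h)
    · exact hw.1 h
    · exact hij (T.D_unique (T.P_D g'.hx h) hw)
    · exact hij (T.D_unique (T.P_D g.hx h) hw)
    · exact hjk (T.D_unique hw h)
  have n3 : ∀ v ∈ C3, v ≠ r ∧ v ∉ T.P x ∧ v ∉ T.P p ∧ v ∉ T.D j := by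
    intro v hv
    have h0 : T.nb k ∉ {r} ∪ T.P x ∪ T.P p ∪ T.D j := by
      rintro (((h | h) | h) | h)
      · exact T.nb_ne k h
      · exact T.nb_not_P g.hx hik h
      · exact T.nb_not_P g'.hx hik h
      · exact hjk (T.D_unique h (T.nb_D k))
    have := comp_not_mem h0 hv
    simp only [Set.mem_union, Set.mem_singleton_iff] at this
    tauto
  have n2 : ∀ v ∈ C2, v ≠ r ∧ v ∉ T.P x ∧ v ∉ T.P p ∧ v ∉ T.D k := by
    intro v hv
    have h0 : T.nb j ∉ {r} ∪ T.P p ∪ T.P x ∪ T.D k := by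
      rintro (((h | h) | h) | h)
      · exact T.nb_ne j h
      · exact T.nb_not_P g'.hx hij h
      · exact T.nb_not_P g.hx hij h
      · exact hjk (T.D_unique (T.nb_D j) h)
    have := comp_not_mem h0 hv
    simp only [Set.mem_union, Set.mem_singleton_iff] at this
    tauto
  have n23 : ∀ v, ¬ (v ∈ C2 ∧ v ∈ C3) := by
    rintro v ⟨hv2, hv3⟩
    have hE : v ∈ T.Ex x j k := by
      refine comp_anti ?_ hv3
      rintro w ((hw | hw) | hw)
      · exact Or.inl (Or.inl (Or.inl hw))
      · exact Or.inl (Or.inl (Or.inr hw))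
      · exact Or.inr hw
    have hO : v ∈ T.Out x y j := by
      refine comp_anti ?_ hv2
      rintro w ((hw | hw) | hw)
      · exact Or.inl (Or.inl (Or.inl hw))
      · exact Or.inl (Or.inr hw)
      · exact Or.inr (T.P_D g.hy hw)
    rcases T.Ex_sub g hik hij hjk hE with h | h
    · exact (n2 v hv2).2.2.2 h
    · exact h.2.1 hO
  obtain ⟨a1, ha1, b1, hb1, f1⟩ := T.cross_edge g'.hx.2 hp g.hx.2
  obtain ⟨a2, ha2, b2, hb2, f2⟩ := T.cross_edge g.hx.2 hx g'.hx.2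
  have hPr : ∀ v, (v ∈ T.P x ∨ v ∈ T.P p) → v ≠ r := by
    rintro v (h | h)
    exacts [T.P_ne g.hx.1 h, T.P_ne g'.hx.1 h]
  refine no_K33_minor' E {r} (T.P p \ T.P x) (T.P x \ T.P p) (T.P x ∩ T.P p) C2 C3
    ⟨⟨r, rfl, fun w hw => by rw [Set.mem_singleton_iff.1 hw]; exact Relation.ReflTransGen.refl⟩,
      T.conn_diff hs3.1 hs3.2, T.conn_diff hs2.1 hs2.2⟩
    ⟨T.conn_inter g.hx g'.hx, conn_comp, conn_comp⟩ ?_ ?_ ?_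
    ⟨r, rfl, _, ⟨g.hx.2, g'.hx.2⟩, T.nb_adj i⟩ ⟨r, rfl, _, self_mem_comp, T.nb_adj j⟩
    ⟨r, rfl, _, self_mem_comp, T.nb_adj k⟩
    ⟨a1, ha1, b1, ⟨hb1.2, hb1.1⟩, f1⟩ ⟨p, ⟨T.self_P p, hp⟩, q, hD2 g'.hy, apq⟩
    ⟨s3, hs3, c3, hc3, e3.symm⟩
    ⟨a2, ha2, b2, hb2, f2⟩ ⟨s2, hs2, c2, hc2, e2.symm⟩ ⟨x, ⟨T.self_P x, hx⟩, y, hD3 g.hy, axy⟩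
  · intro v
    have b2 := hPr v
    simp only [Set.mem_sdiff, Set.mem_singleton_iff]
    tauto
  · intro v
    have b1 := n2 v
    have b2 := n3 v
    have b3 := n23 v
    simp only [Set.mem_inter_iff]
    tauto
  · intro v
    have b1 := n2 v
    have b2 := n3 v
    have b3 := hPr v
    simp only [Set.mem_sdiff, Set.mem_singleton_iff, Set.mem_inter_iff]
    tauto

end BT

end Tree

section Strategy

variable {V : Type*} {G : SimpleGraph V} {r : V}

lemma burned_d (T : BT G r) (Q : ℕ → Set V) (t : ℕ) : ∀ w ∈ burnedSet G r Q t, T.d w ≤ t := by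
  induction t with
  | zero =>
    intro w hw
    have : w = r := hw
    rw [this, T.d_r]
  | succ t ih =>
    rintro w (hw | ⟨⟨u, hu, a⟩, _⟩)
    · exact (ih w hw).trans (Nat.le_succ t)
    · have := ih u hu
      have := T.d_adj u w a
      omega

lemma sn_ge [Finite V] (T : BT G r) {i j k : Fin 3} (hik : i ≠ k) (hij : i ≠ j) (hjk : j ≠ k)
    {x x' : V} (hx : x ∈ T.D i) (hx' : x' ∈ T.D j) :
    {z | z ≠ r ∧ z ∉ comp G (T.cut x x') (T.nb k)}.ncard ≤ sn G (fun _ => 2) r := by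
  let Q : ℕ → Set V := fun t => {w | (w ∈ T.P x ∨ w ∈ T.P x') ∧ T.d w = t + 1}
  have hk := T.nb_not_cut hx hx' hik hjk
  have hvalid : ValidStrategy G (fun _ => 2) r Q := by
    intro t
    refine ⟨Set.toFinite _, ?_, ?_⟩
    · have hsub : Q t = {w | w ∈ T.P x ∧ T.d w = t + 1} ∪ {w | w ∈ T.P x' ∧ T.d w = t + 1} := by
        ext w
        simp only [Q, Set.mem_ofPred_eq, Set.mem_union]
        tauto
      have h1 : ∀ x, {w | w ∈ T.P x ∧ T.d w = t + 1}.ncard ≤ 1 := fun x =>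
        (Set.ncard_le_one_iff (Set.toFinite _)).2 (fun {a b} ha hb => T.P_inj ha.1 hb.1 (ha.2.trans hb.2.symm))
      rw [hsub]
      refine (Set.ncard_union_le _ _).trans ?_
      have := h1 x
      have := h1 x'
      show _ ≤ 2
      omega
    · rw [Set.disjoint_left]
      intro w hw hb
      have := burned_d T Q t w hb
      have := hw.2
      omega
  have hburn : ∀ t, ∀ w ∈ burnedSet G r Q t, w = r ∨ w ∈ comp G (T.cut x x') (T.nb k) := by
    intro t
    induction t with
    | zero => exact fun w hw => Or.inl hw
    | succ t ih =>
      rintro w (hw | ⟨⟨u, hu, a⟩, hprot⟩)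
      · exact ih w hw
      · by_cases hwr : w = r
        · exact Or.inl hwr
        right
        have hd : T.d w ≤ t + 1 := by
          have := burned_d T Q t u hu
          have := T.d_adj u w a
          omega
        have hd0 : T.d w ≠ 0 := fun h => hwr (T.d_zero w h)
        have hnP : ¬ (w ∈ T.P x ∨ w ∈ T.P x') := fun h =>
          hprot (T.d w - 1) (by omega) ⟨h, by omega⟩
        have hncut : w ∉ T.cut x x' := by
          rintro ((h | h) | h)
          · exact hwr h
          · exact hnP (Or.inl h)
          · exact hnP (Or.inr h)
        rcases ih u hu with rfl | h
        · obtain ⟨l, rfl⟩ := (T.adj_r w).1 a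
          rcases BT.fin3 i j k l hij hik hjk with rfl | rfl | rfl
          · exact absurd (Or.inl hx.2) hnP
          · exact absurd (Or.inr hx'.2) hnP
          · exact self_mem_comp
        · exact comp_step hk h hncut a
  have hmem : Nat.card {w : V | ∀ t, w ∉ burnedSet G r Q t} ∈
      {m | ∃ P, ValidStrategy G (fun _ => 2) r P ∧
        m = Nat.card {w : V | ∀ t, w ∉ burnedSet G r P t}} := ⟨Q, hvalid, rfl⟩
  have hbdd : BddAbove {m | ∃ P, ValidStrategy G (fun _ => 2) r P ∧
        m = Nat.card {w : V | ∀ t, w ∉ burnedSet G r P t}} := by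
    refine ⟨Nat.card V, ?_⟩
    rintro m ⟨P, _, rfl⟩
    exact Nat.card_le_card_of_injective _ Subtype.val_injective
  refine le_trans ?_ (le_csSup hbdd hmem)
  rw [Nat.card_coe_set_eq]
  refine Set.ncard_le_ncard ?_ (Set.toFinite _)
  rintro z ⟨hz, hz'⟩ t hb
  rcases hburn t z hb with h | h
  · exact hz h
  · exact hz' h

lemma exists_BT [Fintype V] [DecidableRel G.Adj] (hconn : G.Connected) (hr : G.degree r = 3) :
    Nonempty (BT G r) := by
  classical
  have hpar : ∀ v, ∃ w, v ≠ r → G.Adj v w ∧ G.dist r w + 1 = G.dist r v := by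
    intro v
    by_cases hv : v = r
    · exact ⟨v, fun h => absurd hv h⟩
    obtain ⟨p, hp⟩ := hconn.exists_walk_length_eq_dist v r
    cases p with
    | nil => exact absurd rfl hv
    | @cons _ w _ a p =>
      refine ⟨w, fun _ => ⟨a, ?_⟩⟩
      rw [SimpleGraph.Walk.length_cons] at hp
      have h1 := SimpleGraph.dist_le p
      have h2 := hconn.dist_triangle (u := v) (v := w) (w := r)
      rw [SimpleGraph.dist_eq_one_iff_adj.2 a] at h2
      rw [SimpleGraph.dist_comm (u := r), SimpleGraph.dist_comm (u := r)]
      omega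
  choose par hpar using hpar
  let e : Fin 3 ≃ G.neighborFinset r := (G.neighborFinset r).equivFinOfCardEq hr |>.symm
  refine ⟨⟨par, G.dist r, fun i => (e i : V), ?_, ?_, by simp, ?_, ?_, ?_, ?_⟩⟩
  · intro i j h
    exact e.injective (Subtype.ext h)
  · intro w
    constructor
    · intro h
      exact ⟨e.symm ⟨w, by simpa using h⟩, by simp⟩
    · rintro ⟨i, rfl⟩
      exact (G.mem_neighborFinset r _).1 (e i).2
  · intro v hv
    exact (hconn.dist_eq_zero_iff.1 hv).symm
  · exact fun v hv => (hpar v hv).1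
  · exact fun v hv => (hpar v hv).2
  · intro u v a
    have h2 := hconn.dist_triangle (u := r) (v := u) (w := v)
    rwa [SimpleGraph.dist_eq_one_iff_adj.2 a] at h2

end Strategy

/-- Observation 3.1 (second case): if the fire starts at a vertex of degree 3 in a
connected planar graph on `n ≥ 5` vertices, two firefighters can save more than
`n/3 - 1` vertices. -/
theorem sn_two_of_degree_eq_three {V : Type} [Fintype V] (G : SimpleGraph V)
    [DecidableRel G.Adj] (hconn : G.Connected) (hplanar : IsPlanar G)
    (hn : 5 ≤ Fintype.card V) (r : V) (hr : G.degree r = 3) :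
    ((sn G (fun _ => 2) r : ℝ)) > (Fintype.card V : ℝ) / 3 - 1 := by
  obtain ⟨E⟩ := hplanar
  obtain ⟨T⟩ := exists_BT hconn hr
  obtain ⟨x01, x10, g01⟩ := T.exists_good E (i := 0) (j := 1) (k := 2) (by decide) (by decide)
    (by decide)
  obtain ⟨x02, x20, g02⟩ := T.exists_good E (i := 0) (j := 2) (k := 1) (by decide) (by decide)
    (by decide)
  obtain ⟨x12, x21, g12⟩ := T.exists_good E (i := 1) (j := 2) (k := 0) (by decide) (by decide)
    (by decide)
  -- the strategies, indexed by the neighbour that catches fire first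
  have s2 := sn_ge T (i := 0) (j := 1) (k := 2) (by decide) (by decide) (by decide) g02.hx g12.hx
  have s1 := sn_ge T (i := 0) (j := 2) (k := 1) (by decide) (by decide) (by decide) g01.hx g12.hy
  have s0 := sn_ge T (i := 1) (j := 2) (k := 0) (by decide) (by decide) (by decide) g01.hy g02.hy
  set S2 := {z | z ≠ r ∧ z ∉ comp G (T.cut x02 x12) (T.nb 2)}
  set S1 := {z | z ≠ r ∧ z ∉ comp G (T.cut x01 x21) (T.nb 1)}
  set S0 := {z | z ≠ r ∧ z ∉ comp G (T.cut x10 x20) (T.nb 0)}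
  have hcov : Set.univ ⊆ {r} ∪ S0 ∪ S1 ∪ S2 := by
    intro z _
    by_contra hz
    have hzr : z ≠ r := fun h => hz (Or.inl (Or.inl (Or.inl h)))
    have h0 : z ∈ comp G (T.cut x10 x20) (T.nb 0) := by
      by_contra h; exact hz (Or.inl (Or.inl (Or.inr ⟨hzr, h⟩)))
    have h1 : z ∈ comp G (T.cut x01 x21) (T.nb 1) := by
      by_contra h; exact hz (Or.inl (Or.inr ⟨hzr, h⟩))
    have h2 : z ∈ comp G (T.cut x02 x12) (T.nb 2) := by
      by_contra h; exact hz (Or.inr ⟨hzr, h⟩)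
    have b0 := T.burn_sub g01.symm g02.symm (by decide) (by decide) (by decide) h0
    have b1 := T.burn_sub g01 g12.symm (by decide) (by decide) (by decide) h1
    have b2 := T.burn_sub g02 g12 (by decide) (by decide) (by decide) h2
    have u01 : z ∈ T.D 0 → z ∈ T.D 1 → False := fun h h' => absurd (T.D_unique h h') (by decide)
    have u02 : z ∈ T.D 0 → z ∈ T.D 2 → False := fun h h' => absurd (T.D_unique h h') (by decide)
    have u12 : z ∈ T.D 1 → z ∈ T.D 2 → False := fun h h' => absurd (T.D_unique h h') (by decide)
    obtain ⟨l, hl⟩ := T.D_cover z hzr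
    fin_cases l
    · have hl : z ∈ T.D 0 := hl
      refine T.no_double E g02 g01 (by decide) (by decide) (by decide) hl
        ?_ ?_
      · clear * - b2 hl u01 u02 u12
        grind only
      · clear * - b1 hl u01 u02 u12
        grind only
    · have hl : z ∈ T.D 1 := hl
      refine T.no_double E g12 g01.symm (by decide) (by decide) (by decide) hl
        ?_ ?_
      · clear * - b2 hl u01 u02 u12
        grind only
      · clear * - b0 hl u01 u02 u12
        grind only
    · have hl : z ∈ T.D 2 := hl
      refine T.no_double E g12.symm g02.symm (by decide) (by decide) (by decide) hl
        ?_ ?_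
      · clear * - b1 hl u01 u02 u12
        grind only
      · clear * - b0 hl u01 u02 u12
        grind only
  have hcard : Fintype.card V ≤ 1 + S0.ncard + S1.ncard + S2.ncard := by
    have h1 := Set.ncard_le_ncard hcov (Set.toFinite _)
    rw [Set.ncard_univ, Nat.card_eq_fintype_card] at h1
    have h2 := Set.ncard_union_le ({r} ∪ S0 ∪ S1) S2
    have h3 := Set.ncard_union_le ({r} ∪ S0) S1
    have h4 := Set.ncard_union_le {r} S0
    rw [Set.ncard_singleton] at h4
    omega
  have hfin : Fintype.card V ≤ 1 + 3 * sn G (fun _ => 2) r := by omega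
  have hfin' : (Fintype.card V : ℝ) ≤ 1 + 3 * (sn G (fun _ => 2) r : ℝ) := by exact_mod_cast hfin
  linarith
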